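/- Let k ≥ 1, let λ : Fin k → ℕ with each λ i ≥ 1 and N = Σ_i λ i, and identify Fin N with the sigma type Σ i, Fin (λ i) (the qubits partitioned into blocks of sizes λ i). For each i let G_i be a subgroup of the permutation group of Fin (λ i), and let G be the subgroup of the permutation group of Σ i, Fin (λ i) consisting of the permutations (i, j) ↦ (i, α_i(j)) for families (α_i) with α_i ∈ G_i. Then the real dimension of Gsu(2^N) satisfies dim_ℝ Gsu(2^N) = ∏_{i} (dim_ℝ G_i su(2^{λ i}) + 1) − 1. -/

import Mathlib

open Matrix

/-- The permutation matrix on the index set `I → Fin 2` associated to a permutation `α` of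
`I`, corresponding to the bijection `x ↦ x ∘ α`: its `(x, y)` entry is `1` if `y = x ∘ α`
and `0` otherwise. -/
def qubitPermMatrix {I : Type*} [DecidableEq I] [Fintype I] (α : Equiv.Perm I) :
    Matrix (I → Fin 2) (I → Fin 2) ℂ :=
  Matrix.of fun x y => if y = x ∘ α then 1 else 0


theorem qubitPermMatrix_mul_apply {I : Type*} [DecidableEq I] [Fintype I] (α : Equiv.Perm I)
    (a : Matrix (I → Fin 2) (I → Fin 2) ℂ) (x y : I → Fin 2) :
    (qubitPermMatrix α * a) x y = a (x ∘ α) y := by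
  simp [qubitPermMatrix, Matrix.mul_apply]

theorem mul_qubitPermMatrix_apply {I : Type*} [DecidableEq I] [Fintype I] (α : Equiv.Perm I)
    (a : Matrix (I → Fin 2) (I → Fin 2) ℂ) (x y : I → Fin 2) :
    (a * qubitPermMatrix α) x (y ∘ α) = a x y := by
  have h : ∀ z : I → Fin 2, (y ∘ α = z ∘ α) = (y = z) := fun z =>
    propext ⟨fun h => α.surjective.injective_comp_right h, fun h => by rw [h]⟩
  simp [qubitPermMatrix, Matrix.mul_apply, h]

theorem qubitPermMatrix_conj_iff {I : Type*} [DecidableEq I] [Fintype I] (α : Equiv.Perm I)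
    (a : Matrix (I → Fin 2) (I → Fin 2) ℂ) :
    qubitPermMatrix α * a * (qubitPermMatrix α)⁻¹ = a ↔
      ∀ x y, a (x ∘ α) (y ∘ α) = a x y := by
  have hu : qubitPermMatrix α * qubitPermMatrix α⁻¹ = 1 := by
    ext x y
    rw [qubitPermMatrix_mul_apply, Matrix.one_apply]
    have : (x ∘ α) ∘ (α⁻¹ : Equiv.Perm I) = x := by ext i; simp
    rw [qubitPermMatrix, Matrix.of_apply, this]
    simp only [eq_comm]
  have hdet : IsUnit (qubitPermMatrix α).det := by
    rw [← Matrix.isUnit_iff_isUnit_det]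
    exact IsUnit.of_mul_eq_one _ hu
  have h1 : qubitPermMatrix α * a * (qubitPermMatrix α)⁻¹ = a ↔
      qubitPermMatrix α * a = a * qubitPermMatrix α := by
    constructor
    · intro h
      conv_rhs => rw [← h]
      rw [Matrix.nonsing_inv_mul_cancel_right _ _ hdet]
    · intro h
      rw [h, Matrix.mul_nonsing_inv_cancel_right _ _ hdet]
  rw [h1]
  constructor
  · intro h x y
    have h2 := qubitPermMatrix_mul_apply α a x (y ∘ α)
    rw [h, mul_qubitPermMatrix_apply] at h2
    exact h2.symm
  · intro h
    ext x y
    obtain ⟨z, rfl⟩ : ∃ z : I → Fin 2, y = z ∘ α := ⟨y ∘ α.symm, by ext i; simp⟩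
    rw [qubitPermMatrix_mul_apply, h, mul_qubitPermMatrix_apply]

/-- Orbits on pairs. -/
def pairSetoid {I : Type*} (G : Subgroup (Equiv.Perm I)) :
    Setoid ((I → Fin 2) × (I → Fin 2)) where
  r p q := ∃ α ∈ G, q.1 = p.1 ∘ α ∧ q.2 = p.2 ∘ α
  iseqv := by
    refine ⟨fun p => ⟨1, G.one_mem, by simp, by simp⟩, ?_, ?_⟩
    · rintro ⟨x, y⟩ ⟨x', y'⟩ ⟨α, hα, h1, h2⟩
      refine ⟨α⁻¹, G.inv_mem hα, ?_, ?_⟩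
      · ext i; simp at h1; simp [h1]
      · ext i; simp at h2; simp [h2]
    · rintro ⟨x, y⟩ ⟨x', y'⟩ ⟨x'', y''⟩ ⟨α, hα, h1, h2⟩ ⟨β, hβ, h3, h4⟩
      refine ⟨α * β, G.mul_mem hα hβ, ?_, ?_⟩
      · ext i; simp at h1 h3; simp [h1, h3]
      · ext i; simp at h2 h4; simp [h2, h4]

/-- Parametrization of invariant skew-Hermitian matrices. -/
noncomputable def pairPhi {I : Type*} (G : Subgroup (Equiv.Perm I)) :
    (Quotient (pairSetoid G) → ℝ) →ₗ[ℝ] Matrix (I → Fin 2) (I → Fin 2) ℂ where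
  toFun f := Matrix.of fun x y =>
    (⟨(f (Quotient.mk _ (x, y)) - f (Quotient.mk _ (y, x))) / 2,
      (f (Quotient.mk _ (x, y)) + f (Quotient.mk _ (y, x))) / 2⟩ : ℂ)
  map_add' f g := by
    ext x y
    apply Complex.ext <;> simp <;> ring
  map_smul' c f := by
    ext x y
    apply Complex.ext <;> simp <;> ring

theorem pairPhi_apply {I : Type*} (G : Subgroup (Equiv.Perm I))
    (f : Quotient (pairSetoid G) → ℝ) (x y : I → Fin 2) : pairPhi G f x y =
    (⟨(f (Quotient.mk _ (x, y)) - f (Quotient.mk _ (y, x))) / 2,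
      (f (Quotient.mk _ (x, y)) + f (Quotient.mk _ (y, x))) / 2⟩ : ℂ) := rfl

theorem pairPhi_injective {I : Type*} (G : Subgroup (Equiv.Perm I)) :
    Function.Injective (pairPhi G) := by
  intro f g h
  funext q
  induction q using Quotient.inductionOn with
  | h p =>
    obtain ⟨x, y⟩ := p
    have h1 := congrFun (congrFun h x) y
    rw [pairPhi_apply, pairPhi_apply, Complex.mk.injEq] at h1
    linarith [h1.1, h1.2]

/-- Trace functional. -/
noncomputable def pairTau {I : Type*} [Fintype I] [DecidableEq I]
    (G : Subgroup (Equiv.Perm I)) :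
    Module.Dual ℝ (Quotient (pairSetoid G) → ℝ) :=
  ∑ x : I → Fin 2, LinearMap.proj (Quotient.mk _ (x, x))

theorem pairTau_apply {I : Type*} [Fintype I] [DecidableEq I]
    (G : Subgroup (Equiv.Perm I)) (f : Quotient (pairSetoid G) → ℝ) :
    pairTau G f = ∑ x : I → Fin 2, f (Quotient.mk _ (x, x)) := by
  simp [pairTau]

theorem pairTau_ne_zero {I : Type*} [Fintype I] [DecidableEq I]
    (G : Subgroup (Equiv.Perm I)) : pairTau G ≠ 0 := by
  intro h
  have h1 := LinearMap.congr_fun h (fun _ => 1)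
  rw [pairTau_apply] at h1
  simp at h1

theorem trace_pairPhi {I : Type*} [Fintype I] [DecidableEq I]
    (G : Subgroup (Equiv.Perm I)) (f : Quotient (pairSetoid G) → ℝ) :
    (pairPhi G f).trace = (⟨0, pairTau G f⟩ : ℂ) := by
  rw [pairTau_apply]
  apply Complex.ext
  · simp [Matrix.trace, pairPhi_apply]
  · simp [Matrix.trace, pairPhi_apply]

theorem finrank_Gsu {I : Type*} [Fintype I] [DecidableEq I]
    (G : Subgroup (Equiv.Perm I)) (V : Submodule ℝ (Matrix (I → Fin 2) (I → Fin 2) ℂ))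
    (hV : ∀ a, a ∈ V ↔ aᴴ = -a ∧ a.trace = 0 ∧
      ∀ α ∈ G, qubitPermMatrix α * a * (qubitPermMatrix α)⁻¹ = a) :
    Module.finrank ℝ V + 1 = Nat.card (Quotient (pairSetoid G)) := by
  classical
  have : Fintype (Quotient (pairSetoid G)) := Fintype.ofFinite _
  have hmap : V = (LinearMap.ker (pairTau G)).map (pairPhi G) := by
    ext a
    rw [hV, Submodule.mem_map]
    constructor
    · rintro ⟨hs, ht, hi⟩
      have hs' : ∀ x y, a x y = - star (a y x) := fun x y => by
        have := congrFun (congrFun hs x) y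
        rw [Matrix.conjTranspose_apply, Matrix.neg_apply] at this
        rw [this, neg_neg]
      have hi' : ∀ α ∈ G, ∀ x y, a (x ∘ α) (y ∘ α) = a x y := fun α hα =>
        (qubitPermMatrix_conj_iff α a).1 (hi α hα)
      let f : Quotient (pairSetoid G) → ℝ := Quotient.lift
        (fun p => (a p.1 p.2).re + (a p.1 p.2).im) (by
          rintro ⟨x, y⟩ ⟨x', y'⟩ ⟨α, hα, h1, h2⟩
          simp only at h1 h2
          subst h1 h2
          simp only [hi' α hα])
      have hf : ∀ x y, f (Quotient.mk _ (x, y)) = (a x y).re + (a x y).im := fun x y => rfl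
      have hfa : pairPhi G f = a := by
        ext x y
        rw [pairPhi_apply, hf, hf, hs' y x]
        apply Complex.ext <;> simp <;> ring
      refine ⟨f, ?_, hfa⟩
      rw [← hfa, trace_pairPhi] at ht
      exact congrArg Complex.im ht
    · rintro ⟨f, hf, rfl⟩
      refine ⟨?_, ?_, ?_⟩
      · ext x y
        rw [Matrix.conjTranspose_apply, Matrix.neg_apply, pairPhi_apply, pairPhi_apply]
        apply Complex.ext <;> simp <;> ring
      · rw [trace_pairPhi, LinearMap.mem_ker.1 hf]; rfl
      · intro α hα
        rw [qubitPermMatrix_conj_iff]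
        intro x y
        have h : ∀ x y : I → Fin 2, (Quotient.mk (pairSetoid G) (x ∘ α, y ∘ α)) =
            Quotient.mk (pairSetoid G) (x, y) := fun x y =>
          (Quotient.sound ⟨α, hα, rfl, rfl⟩ : Quotient.mk (pairSetoid G) (x, y) = _).symm
        rw [pairPhi_apply, pairPhi_apply, h, h]
  rw [hmap, ← (Submodule.equivMapOfInjective _ (pairPhi_injective G) _).finrank_eq,
    Module.Dual.finrank_ker_add_one_of_ne_zero (pairTau_ne_zero G), Module.finrank_pi,
    Nat.card_eq_fintype_card]

theorem card_pair_sigma (k : ℕ) (lam : Fin k → ℕ)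
    (G' : ∀ i, Subgroup (Equiv.Perm (Fin (lam i))))
    (G : Subgroup (Equiv.Perm (Σ i, Fin (lam i))))
    (hG : ∀ π : Equiv.Perm (Σ i, Fin (lam i)),
      π ∈ G ↔ ∃ α : ∀ i, Equiv.Perm (Fin (lam i)),
        (∀ i, α i ∈ G' i) ∧ ∀ p : Σ i, Fin (lam i), π p = ⟨p.1, α p.1 p.2⟩) :
    Nat.card (Quotient (pairSetoid G)) = ∏ i, Nat.card (Quotient (pairSetoid (G' i))) := by
  rw [← Nat.card_pi]
  let F : Quotient (pairSetoid G) → ∀ i, Quotient (pairSetoid (G' i)) := Quotient.lift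
    (fun p i => Quotient.mk _ (fun j => p.1 ⟨i, j⟩, fun j => p.2 ⟨i, j⟩)) (by
      rintro ⟨x, y⟩ ⟨x', y'⟩ ⟨π, hπ, h1, h2⟩
      obtain ⟨α, hα, h⟩ := (hG π).1 hπ
      simp only at h1 h2
      subst h1 h2
      funext i
      refine Quotient.sound ⟨α i, hα i, ?_, ?_⟩ <;> funext j <;> simp [h])
  refine Nat.card_congr (Equiv.ofBijective F ⟨?_, ?_⟩)
  · intro p q
    induction p using Quotient.inductionOn with | h p => ?_
    induction q using Quotient.inductionOn with | h q => ?_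
    intro h
    have h' : ∀ i, ∃ α ∈ G' i, (fun j => q.1 ⟨i, j⟩) = (fun j => p.1 ⟨i, j⟩) ∘ α ∧
        (fun j => q.2 ⟨i, j⟩) = (fun j => p.2 ⟨i, j⟩) ∘ α := fun i =>
      Quotient.exact (congrFun h i)
    choose α hα h1 h2 using h'
    refine Quotient.sound ⟨Equiv.sigmaCongrRight α, (hG _).2 ⟨α, hα, fun p => rfl⟩, ?_, ?_⟩
    · funext ⟨i, j⟩; exact congrFun (h1 i) j
    · funext ⟨i, j⟩; exact congrFun (h2 i) j
  · intro g
    refine ⟨Quotient.mk _ (fun s => (g s.1).out.1 s.2, fun s => (g s.1).out.2 s.2), ?_⟩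
    funext i
    exact Quotient.out_eq (g i)

/-- Let `k ≥ 1`, `λ : Fin k → ℕ` with each `λ i ≥ 1` and `N = Σ i, λ i`, and
identify the `N` qubits with the sigma type `Σ i, Fin (λ i)`.  For subgroups `G_i` of the
permutation groups of the blocks, let `G` be the subgroup of permutations of `Σ i, Fin (λ i)`
of the form `(i, j) ↦ (i, α_i j)` with `α_i ∈ G_i`.  Then
`dim_ℝ Gsu(2^N) = ∏ i, (dim_ℝ G_i su(2^{λ i}) + 1) − 1`. -/
theorem finrank_product_Gsu (k : ℕ) (hk : 1 ≤ k) (lam : Fin k → ℕ)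
    (hlam : ∀ i, 1 ≤ lam i) (N : ℕ) (hN : N = ∑ i, lam i)
    (G' : ∀ i, Subgroup (Equiv.Perm (Fin (lam i))))
    (G : Subgroup (Equiv.Perm (Σ i, Fin (lam i))))
    (hG : ∀ π : Equiv.Perm (Σ i, Fin (lam i)),
      π ∈ G ↔ ∃ α : ∀ i, Equiv.Perm (Fin (lam i)),
        (∀ i, α i ∈ G' i) ∧ ∀ p : Σ i, Fin (lam i), π p = ⟨p.1, α p.1 p.2⟩)
    (Vblock : ∀ i, Submodule ℝ (Matrix (Fin (lam i) → Fin 2) (Fin (lam i) → Fin 2) ℂ))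
    (hVblock : ∀ i a, a ∈ Vblock i ↔ aᴴ = -a ∧ a.trace = 0 ∧
      ∀ α ∈ G' i, qubitPermMatrix α * a * (qubitPermMatrix α)⁻¹ = a)
    (W : Submodule ℝ
      (Matrix ((Σ i, Fin (lam i)) → Fin 2) ((Σ i, Fin (lam i)) → Fin 2) ℂ))
    (hW : ∀ a, a ∈ W ↔ aᴴ = -a ∧ a.trace = 0 ∧
      ∀ π ∈ G, qubitPermMatrix π * a * (qubitPermMatrix π)⁻¹ = a) :
    Module.finrank ℝ W = (∏ i, (Module.finrank ℝ (Vblock i) + 1)) - 1 := by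
  have h := finrank_Gsu G W hW
  rw [card_pair_sigma k lam G' G hG] at h
  rw [Finset.prod_congr rfl (fun i _ => finrank_Gsu (G' i) (Vblock i) (hVblock i)), ← h]
  rfl
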